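/- arXiv:2510.20530 — 2 statements merged into one kernel-verified Lean document; each statement's English description precedes it below -/
import Mathlib

section
/- Fix an integer d ≥ 2 and a unit vector ψ ∈ ℂ^d. Consider single-call probabilistic protocols (S, S_ch) with d_F = d, together with p ∈ ℝ, satisfying S ⋆ U = p · Uᵀ|ψ⟩⟨ψ|U̅ for all U ∈ SU(d) (exact probabilistic unitary transposition on the known pure state ψ). Then every such protocol satisfies p ≤ 1/d, and the bound is attained: the matrix S = |ψ⟩⟨ψ|_O ⊗ Φ_{IF} (with |ψ⟩⟨ψ| on the factor O and Φ on the factors I, F) is a superinstrument element of such a protocol achieving p = 1/d. Hence the maximal success probability of exact probabilistic unitary transposition on a known pure state with a single call of the unitary is 1/d. -/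
open Matrix Kronecker BigOperators ComplexOrder

noncomputable section

/-- Entrywise complex conjugate `U̅` of a matrix. -/
def mconj {d : ℕ} (U : Matrix (Fin d) (Fin d) ℂ) : Matrix (Fin d) (Fin d) ℂ :=
  U.map (starRingEnd ℂ)

/-- Rank-one outer product `|v⟩⟨v|`. -/
def outer {n : Type*} (v : n → ℂ) : Matrix n n ℂ :=
  Matrix.vecMulVec v (star v)

/-- Choi vector `|U⟩⟩ = Σ_i e_i ⊗ U e_i`. -/
def choiVec {d : ℕ} (U : Matrix (Fin d) (Fin d) ℂ) : Fin d × Fin d → ℂ :=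
  fun p => U p.2 p.1

/-- `|U⟩⟩⟨⟨U|`. -/
def choiProj {d : ℕ} (U : Matrix (Fin d) (Fin d) ℂ) :
    Matrix (Fin d × Fin d) (Fin d × Fin d) ℂ :=
  outer (choiVec U)

/-- Partial trace over the first tensor factor. -/
def ptrLeft {α β : Type*} [Fintype α] (S : Matrix (α × β) (α × β) ℂ) :
    Matrix β β ℂ :=
  fun b b' => ∑ a, S (a, b) (a, b')

/-- Partial trace over the second (last) tensor factor. -/
def ptrRight {α β : Type*} [Fintype β] (S : Matrix (α × β) (α × β) ℂ) :
    Matrix α α ℂ :=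
  fun a a' => ∑ b, S (a, b) (a', b)

/-- Action `S ⋆ U := Tr_{IO}[ S · (|U̅⟩⟩⟨⟨U̅|_{IO} ⊗ 1_F) ]` of a single-call supermap
on the unitary channel given by `U`; `S` lives on `I ⊗ O ⊗ F`. -/
def act {d dF : ℕ}
    (S : Matrix ((Fin d × Fin d) × Fin dF) ((Fin d × Fin d) × Fin dF) ℂ)
    (U : Matrix (Fin d) (Fin d) ℂ) : Matrix (Fin dF) (Fin dF) ℂ :=
  ptrLeft (S * (choiProj (mconj U) ⊗ₖ (1 : Matrix (Fin dF) (Fin dF) ℂ)))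

/-- A single-call probabilistic protocol: `0 ≤ S ≤ S_ch` with
`Tr_F(S_ch) = σ ⊗ 1_d`, `σ ≥ 0`, `Tr σ = 1`. -/
def IsProtocol {d dF : ℕ}
    (S Sch : Matrix ((Fin d × Fin d) × Fin dF) ((Fin d × Fin d) × Fin dF) ℂ) : Prop :=
  S.PosSemidef ∧ (Sch - S).PosSemidef ∧
    ∃ σ : Matrix (Fin d) (Fin d) ℂ, σ.PosSemidef ∧ σ.trace = 1 ∧
      ptrRight Sch = σ ⊗ₖ (1 : Matrix (Fin d) (Fin d) ℂ)

/-- The maximally entangled unit vector `|φ⁺⟩ = (1/√d) Σ_i e_i ⊗ e_i`. -/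
def maxEntVec (d : ℕ) : Fin d × Fin d → ℂ :=
  fun p => if p.1 = p.2 then ((1 / Real.sqrt d : ℝ) : ℂ) else 0

/-- `Φ = |φ⁺⟩⟨φ⁺|`. -/
def Phi (d : ℕ) : Matrix (Fin d × Fin d) (Fin d × Fin d) ℂ := outer (maxEntVec d)

/-- The matrix `|ψ⟩⟨ψ|_O ⊗ Φ_{IF}` (with `|ψ⟩⟨ψ|` on the factor `O` and `Φ` on the
factors `I`, `F`), written on the index order `(I × O) × F`. -/
def transOpt {d : ℕ} (ψ : Fin d → ℂ) :
    Matrix ((Fin d × Fin d) × Fin d) ((Fin d × Fin d) × Fin d) ℂ :=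
  fun x y => outer ψ x.1.2 y.1.2 * Phi d (x.1.1, x.2) (y.1.1, y.2)


/-! Because `S` is positive semidefinite, exactness forces `S` to annihilate `|U̅⟩⟩ ⊗ g` whenever
`g ⊥ Uᵀψ`. Reflecting `U` along a unit vector `ω ⊥ ψ` changes `Uᵀψ` only by a sign, so `S` also
annihilates the part `conj (Uᵀω) ⊗ ω ⊗ Uᵀω` of `|U̅⟩⟩ ⊗ Uᵀω`. Here `Uᵀω` is an arbitrary unit
vector, and polarization gives `S (x ⊗ ω ⊗ y) = 0` for all `x` and `y`: `S` is supported on `ψ` in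
the output factor. Choosing `U` with `Uᵀψ = e_i`, only the component `e_i ⊗ ψ` of `|U̅⟩⟩` survives,
so `⟨e_i ψ e_i|S|e_i ψ e_i⟩ = p`. This is at most `⟨e_i ψ|Tr_F S_ch|e_i ψ⟩ = σ_{ii}`, and summing
over `i` gives `d p ≤ Tr σ = 1`. -/

/-- The tensor product `x ⊗ y` of two vectors in coordinates, as a bilinear map. -/
def tensorVec {α β R : Type*} [CommSemiring R] : (α → R) →ₗ[R] (β → R) →ₗ[R] (α × β → R) :=
  LinearMap.mk₂ R (fun x y p => x p.1 * y p.2)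
    (fun _ _ _ => funext fun _ => add_mul _ _ _) (fun _ _ _ => funext fun _ => mul_assoc _ _ _)
    (fun _ _ _ => funext fun _ => mul_add _ _ _) (fun _ _ _ => funext fun _ => mul_left_comm _ _ _)

local notation:70 x:70 "⊗ᵥ" y:71 => tensorVec x y

section TensorVec

variable {α β R : Type*} [CommSemiring R]

lemma tensorVec_apply (x : α → R) (y : β → R) (p : α × β) : (x ⊗ᵥ y) p = x p.1 * y p.2 := rfl

lemma star_tensorVec [StarRing R] (x : α → R) (y : β → R) : star (x ⊗ᵥ y) = star x ⊗ᵥ star y :=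
  funext fun _ => star_mul' _ _

lemma tensorVec_dotProduct_tensorVec [Fintype α] [Fintype β] (x x' : α → R) (y y' : β → R) :
    (x ⊗ᵥ y) ⬝ᵥ (x' ⊗ᵥ y') = (x ⬝ᵥ x') * (y ⬝ᵥ y') := by
  simp only [dotProduct, tensorVec_apply, Fintype.sum_prod_type, Finset.sum_mul_sum,
    mul_mul_mul_comm]

lemma kronecker_mulVec_tensorVec {α' β' : Type*} [Fintype α] [Fintype β] (A : Matrix α' α R)
    (B : Matrix β' β R) (x : α → R) (y : β → R) : (A ⊗ₖ B) *ᵥ (x ⊗ᵥ y) = (A *ᵥ x) ⊗ᵥ (B *ᵥ y) :=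
  funext fun p => tensorVec_dotProduct_tensorVec (A p.1) x (B p.2) y

end TensorVec

section PartialTrace

variable {α β : Type*} [Fintype α] [Fintype β]

lemma ptrLeft_mul_outer_kronecker_one_apply [DecidableEq β] (S : Matrix (α × β) (α × β) ℂ)
    (v : α → ℂ) (b b' : β) :
    ptrLeft (S * (outer v ⊗ₖ (1 : Matrix β β ℂ))) b b' =
      ∑ a, ∑ a', S (a, b) (a', b') * (v a' * star (v a)) := by
  simp only [ptrLeft, mul_apply, Fintype.sum_prod_type, kroneckerMap_apply, one_apply, outer,
    vecMulVec_apply, Pi.star_apply, mul_ite, mul_one, mul_zero, Finset.sum_ite_eq',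
    Finset.mem_univ, if_true]

lemma star_dotProduct_ptrLeft_mulVec [DecidableEq β] (S : Matrix (α × β) (α × β) ℂ)
    (v : α → ℂ) (g : β → ℂ) :
    star g ⬝ᵥ ptrLeft (S * (outer v ⊗ₖ (1 : Matrix β β ℂ))) *ᵥ g =
      star (v ⊗ᵥ g) ⬝ᵥ S *ᵥ (v ⊗ᵥ g) := by
  calc star g ⬝ᵥ ptrLeft (S * (outer v ⊗ₖ (1 : Matrix β β ℂ))) *ᵥ g
      = ∑ b, ∑ b', ∑ a, ∑ a', star (g b) * (S (a, b) (a', b') * (v a' * star (v a)) * g b') := by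
        simp only [dotProduct, mulVec, ptrLeft_mul_outer_kronecker_one_apply, Pi.star_apply,
          Finset.sum_mul, Finset.mul_sum]
    _ = ∑ b, ∑ a, ∑ b', ∑ a', star (g b) * (S (a, b) (a', b') * (v a' * star (v a)) * g b') :=
        Finset.sum_congr rfl fun _ _ => Finset.sum_comm
    _ = ∑ a, ∑ b, ∑ a', ∑ b', star (g b) * (S (a, b) (a', b') * (v a' * star (v a)) * g b') :=
        Finset.sum_comm.trans <| Finset.sum_congr rfl fun _ _ => Finset.sum_congr rfl fun _ _ =>
          Finset.sum_comm
    _ = star (v ⊗ᵥ g) ⬝ᵥ S *ᵥ (v ⊗ᵥ g) := by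
        simp only [dotProduct, mulVec, Pi.star_apply, tensorVec_apply, star_mul',
          Fintype.sum_prod_type, Finset.mul_sum]
        exact Fintype.sum_congr _ _ fun a => Fintype.sum_congr _ _ fun b =>
          Fintype.sum_congr _ _ fun a' => Fintype.sum_congr _ _ fun b' => by ring

lemma star_dotProduct_ptrRight_mulVec [DecidableEq β] (S : Matrix (α × β) (α × β) ℂ)
    (v : α → ℂ) :
    star v ⬝ᵥ ptrRight S *ᵥ v =
      ∑ b, star (v ⊗ᵥ Pi.single b 1) ⬝ᵥ S *ᵥ (v ⊗ᵥ Pi.single b 1) := by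
  calc star v ⬝ᵥ ptrRight S *ᵥ v
      = ∑ a, ∑ a', ∑ b, star (v a) * (S (a, b) (a', b) * v a') := by
        simp only [dotProduct, mulVec, ptrRight, Pi.star_apply, Finset.sum_mul, Finset.mul_sum]
    _ = ∑ b, ∑ a, ∑ a', star (v a) * (S (a, b) (a', b) * v a') := by
        rw [Finset.sum_comm_cycle]
    _ = ∑ b, star (v ⊗ᵥ Pi.single b 1) ⬝ᵥ S *ᵥ (v ⊗ᵥ Pi.single b 1) := by
        simp [dotProduct, mulVec, tensorVec_apply, Fintype.sum_prod_type, Pi.single_apply,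
          Finset.mul_sum, apply_ite]

end PartialTrace

section ChoiVec

variable {d : ℕ}

lemma choiVec_vecMulVec (y x : Fin d → ℂ) : choiVec (vecMulVec y x) = x ⊗ᵥ y :=
  funext fun _ => mul_comm _ _

lemma choiVec_eq_sum (M : Matrix (Fin d) (Fin d) ℂ) :
    choiVec M = ∑ j, Pi.single j 1 ⊗ᵥ M.col j := by
  ext p
  simp [choiVec, tensorVec_apply, Finset.sum_apply, Pi.single_apply]

lemma mconj_smul (c : ℂ) (M : Matrix (Fin d) (Fin d) ℂ) : mconj (c • M) = star c • mconj M := by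
  ext i j
  simp [mconj]

end ChoiVec

section Outer

variable {n : Type*}

lemma posSemidef_outer [Finite n] (v : n → ℂ) : (outer v).PosSemidef :=
  posSemidef_vecMulVec_self_star v

lemma outer_smul {c : ℂ} (hc : c ∈ unitary ℂ) (v : n → ℂ) : outer (c • v) = outer v := by
  have hcc : c * star c = 1 := Unitary.mul_star_self_of_mem hc
  rw [outer, star_smul, smul_vecMulVec, vecMulVec_smul, smul_smul, hcc, one_smul, outer]

lemma isStarProjection_outer [Fintype n] {v : n → ℂ} (hv : star v ⬝ᵥ v = 1) :
    IsStarProjection (outer v) where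
  isIdempotentElem := by
    rw [IsIdempotentElem, outer, vecMulVec_mul_vecMulVec, hv, one_smul]
  isSelfAdjoint := (posSemidef_outer v).isHermitian

lemma star_dotProduct_outer_mulVec [Fintype n] (v g : n → ℂ) :
    star g ⬝ᵥ outer v *ᵥ g = (star g ⬝ᵥ v) * (star v ⬝ᵥ g) := by
  rw [outer, vecMulVec_mulVec, dotProduct_smul, op_smul_eq_mul]

lemma posSemidef_one_sub_outer [Fintype n] [DecidableEq n] {v : n → ℂ} (hv : star v ⬝ᵥ v = 1) :
    (1 - outer v).PosSemidef := by
  have h := (isStarProjection_outer hv).one_sub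
  rw [← h.isIdempotentElem]
  nth_rw 1 [← h.isSelfAdjoint.star_eq]
  exact posSemidef_conjTranspose_mul_self _

end Outer

section Unitary

variable {𝕜 n : Type*} [RCLike 𝕜] [Fintype n]

lemma star_dotProduct_self_eq_norm_sq (v : n → 𝕜) :
    star v ⬝ᵥ v = ((‖WithLp.toLp 2 v‖ ^ 2 : ℝ) : 𝕜) := by
  rw [dotProduct_comm, ← EuclideanSpace.inner_toLp_toLp, inner_self_eq_norm_sq_to_K]
  norm_cast

lemma exists_smul_eq_of_ne_zero {v : n → 𝕜} (hv : v ≠ 0) :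
    ∃ (r : 𝕜) (u : n → 𝕜), star u ⬝ᵥ u = 1 ∧ r • u = v := by
  have hw : WithLp.toLp 2 v ≠ 0 := by simpa using hv
  have hnorm : (‖WithLp.toLp 2 v‖ : 𝕜) ≠ 0 := by simpa using hv
  refine ⟨‖WithLp.toLp 2 v‖, (‖WithLp.toLp 2 v‖ : 𝕜)⁻¹ • v, ?_, smul_inv_smul₀ hnorm v⟩
  rw [star_dotProduct_self_eq_norm_sq, WithLp.toLp_smul, norm_smul_inv_norm hw, one_pow,
    RCLike.ofReal_one]

lemma exists_orthonormalBasis_apply_eq {v : n → 𝕜} (hv : star v ⬝ᵥ v = 1) (i : n) :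
    ∃ b : OrthonormalBasis n 𝕜 (EuclideanSpace 𝕜 n), b i = WithLp.toLp 2 v := by
  have hnorm : ‖WithLp.toLp 2 v‖ = 1 := by
    rw [star_dotProduct_self_eq_norm_sq, ← RCLike.ofReal_one, RCLike.ofReal_inj] at hv
    exact (pow_eq_one_iff_of_nonneg (norm_nonneg _) two_ne_zero).1 hv
  have hon : Orthonormal 𝕜 (({i} : Set n).domRestrict fun _ : n => WithLp.toLp 2 v) :=
    ⟨fun _ => hnorm, fun _ _ h => absurd (Subsingleton.elim _ _) h⟩
  obtain ⟨b, hb⟩ := hon.exists_orthonormalBasis_extension_of_card_eq (by simp)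
  exact ⟨b, hb i rfl⟩

variable [DecidableEq n]

lemma exists_mem_unitaryGroup_mulVec_eq {u v : n → 𝕜} (hu : star u ⬝ᵥ u = 1)
    (hv : star v ⬝ᵥ v = 1) : ∃ U ∈ unitaryGroup n 𝕜, U *ᵥ u = v := by
  have : Nonempty n := by
    by_contra h
    rw [not_nonempty_iff] at h
    simp at hu
  obtain ⟨b, hb⟩ := exists_orthonormalBasis_apply_eq hu (Classical.arbitrary n)
  obtain ⟨b', hb'⟩ := exists_orthonormalBasis_apply_eq hv (Classical.arbitrary n)
  let e := EuclideanSpace.basisFun n 𝕜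
  let f := b.equiv b' (Equiv.refl n)
  have hf : f (WithLp.toLp 2 u) = WithLp.toLp 2 v := by
    rw [← hb, ← hb', OrthonormalBasis.equiv_apply_basis, Equiv.refl_apply]
  refine ⟨_, f.toMatrix_mem_unitaryGroup e e, ?_⟩
  have hrepr : ∀ x : n → 𝕜, ⇑(e.toBasis.repr (WithLp.toLp 2 x)) = x := fun _ => rfl
  simpa [hf, hrepr] using
    LinearMap.toMatrix_mulVec_repr e.toBasis e.toBasis f.toLinearEquiv.toLinearMap (WithLp.toLp 2 u)

lemma exists_mem_unitaryGroup_vecMul_eq {u v : n → 𝕜} (hu : star u ⬝ᵥ u = 1)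
    (hv : star v ⬝ᵥ v = 1) : ∃ U ∈ unitaryGroup n 𝕜, u ᵥ* U = v := by
  obtain ⟨U, hU, h⟩ := exists_mem_unitaryGroup_mulVec_eq (u := star u) (v := star v)
    (by rwa [star_star, dotProduct_comm]) (by rwa [star_star, dotProduct_comm])
  refine ⟨star U, Unitary.star_mem hU, ?_⟩
  rw [star_eq_conjTranspose, ← star_star u, ← star_mulVec, h, star_star]

lemma star_vecMul_dotProduct_vecMul {U : Matrix n n 𝕜} (hU : U ∈ unitaryGroup n 𝕜)
    (x y : n → 𝕜) : star (x ᵥ* U) ⬝ᵥ (y ᵥ* U) = star x ⬝ᵥ y := by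
  rw [star_vecMul, dotProduct_comm, ← dotProduct_mulVec, mulVec_mulVec, ← star_eq_conjTranspose,
    mem_unitaryGroup_iff.1 hU, one_mulVec, dotProduct_comm]

lemma exists_smul_mem_specialUnitaryGroup [Nonempty n] {U : Matrix n n ℂ}
    (hU : U ∈ unitaryGroup n ℂ) :
    ∃ c ∈ unitary ℂ, c • U ∈ specialUnitaryGroup n ℂ := by
  have hdet := det_of_mem_unitary hU
  obtain ⟨c, hc⟩ := IsAlgClosed.exists_pow_nat_eq (star U.det) (Fintype.card_pos (α := n))
  have hnorm : ‖c‖ = 1 := by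
    rw [← pow_eq_one_iff_of_nonneg (norm_nonneg c) (Fintype.card_ne_zero (α := n)), ← norm_pow, hc,
      norm_star, CStarRing.norm_of_mem_unitary hdet]
  have hunit : c ∈ unitary ℂ := by
    rw [Unitary.mem_iff_self_mul_star, Complex.star_def, Complex.mul_conj']
    simp [hnorm]
  refine ⟨c, hunit, mem_specialUnitaryGroup_iff.2 ⟨Unitary.smul_mem ⟨c, hunit⟩ hU, ?_⟩⟩
  rw [det_smul, hc, Unitary.star_mul_self_of_mem hdet]

end Unitary

-- Replacing `x` by `i x` turns the antisymmetry `B x y = -B y x` into symmetry.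
lemma sesquilinear_eq_zero_of_isAlt {V W : Type*} [AddCommGroup V] [Module ℂ V] [AddCommGroup W]
    [Module ℂ W] {B : V →ₗ⋆[ℂ] V →ₗ[ℂ] W} (hB : B.IsAlt) : B = 0 := by
  ext x y
  have hsymm : B x y = B y x := by
    have h := hB.neg (Complex.I • x) y
    simpa using h
  have hneg := hB.neg x y
  rw [← hsymm, neg_eq_iff_add_eq_zero, ← two_smul ℂ] at hneg
  simpa using hneg

lemma star_dotProduct_mulVec_add_of_mulVec_eq_zero {n R : Type*} [Fintype n] [NonUnitalSemiring R]
    [StarRing R] {S : Matrix n n R} (hS : S.IsHermitian) {r : n → R} (hr : S *ᵥ r = 0) (x : n → R) :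
    star (x + r) ⬝ᵥ S *ᵥ (x + r) = star x ⬝ᵥ S *ᵥ x := by
  have hr' : star r ᵥ* S = 0 := by rw [← hS.eq, ← star_mulVec, hr, star_zero]
  rw [mulVec_add, hr, add_zero, star_add, add_dotProduct, dotProduct_mulVec (star r), hr',
    zero_dotProduct, add_zero]

section Act

variable {d dF : ℕ}

lemma act_smul {c : ℂ} (hc : c ∈ unitary ℂ)
    (S : Matrix ((Fin d × Fin d) × Fin dF) ((Fin d × Fin d) × Fin dF) ℂ)
    (U : Matrix (Fin d) (Fin d) ℂ) : act S (c • U) = act S U := by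
  have hvec : choiVec (mconj (c • U)) = star c • choiVec (mconj U) := by rw [mconj_smul]; rfl
  rw [act, choiProj, hvec, outer_smul (Unitary.star_mem hc), act, choiProj]

lemma star_dotProduct_act_mulVec
    (S : Matrix ((Fin d × Fin d) × Fin dF) ((Fin d × Fin d) × Fin dF) ℂ)
    (U : Matrix (Fin d) (Fin d) ℂ) (g : Fin dF → ℂ) :
    star g ⬝ᵥ act S U *ᵥ g =
      star (choiVec (mconj U) ⊗ᵥ g) ⬝ᵥ S *ᵥ (choiVec (mconj U) ⊗ᵥ g) :=
  star_dotProduct_ptrLeft_mulVec S _ g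

lemma transpose_mul_outer_mul_mconj (U : Matrix (Fin d) (Fin d) ℂ) (ψ : Fin d → ℂ) :
    Uᵀ * outer ψ * mconj U = outer (ψ ᵥ* U) := by
  have hconj : Uᴴᵀ = mconj U := rfl
  rw [outer, mul_vecMulVec, vecMulVec_mul, mulVec_transpose, ← hconj, vecMul_transpose,
    ← star_vecMul, outer]

lemma sum_star_dotProduct_mulVec_le
    {S Sch : Matrix ((Fin d × Fin d) × Fin dF) ((Fin d × Fin d) × Fin dF) ℂ}
    {σ : Matrix (Fin d) (Fin d) ℂ} (hSch : (Sch - S).PosSemidef)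
    (hσ : ptrRight Sch = σ ⊗ₖ (1 : Matrix (Fin d) (Fin d) ℂ)) (x : Fin d → ℂ)
    {ψ : Fin d → ℂ} (hψ : star ψ ⬝ᵥ ψ = 1) :
    ∑ f, star (x ⊗ᵥ ψ ⊗ᵥ Pi.single f 1) ⬝ᵥ S *ᵥ (x ⊗ᵥ ψ ⊗ᵥ Pi.single f 1) ≤
      star x ⬝ᵥ σ *ᵥ x :=
  calc ∑ f, star (x ⊗ᵥ ψ ⊗ᵥ Pi.single f 1) ⬝ᵥ S *ᵥ (x ⊗ᵥ ψ ⊗ᵥ Pi.single f 1)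
      ≤ ∑ f, star (x ⊗ᵥ ψ ⊗ᵥ Pi.single f 1) ⬝ᵥ Sch *ᵥ (x ⊗ᵥ ψ ⊗ᵥ Pi.single f 1) :=
        Finset.sum_le_sum fun f _ => sub_nonneg.1 <| by
          rw [← dotProduct_sub, ← sub_mulVec]
          exact hSch.dotProduct_mulVec_nonneg _
    _ = star x ⬝ᵥ σ *ᵥ x := by
        rw [← star_dotProduct_ptrRight_mulVec, hσ, kronecker_mulVec_tensorVec, one_mulVec,
          star_tensorVec, tensorVec_dotProduct_tensorVec, hψ, mul_one]

end Act

section Transposition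

variable {d : ℕ} {S Sch : Matrix ((Fin d × Fin d) × Fin d) ((Fin d × Fin d) × Fin d) ℂ}
  {ψ : Fin d → ℂ} {p : ℝ}

/-- `S` transposes every unitary on the known state `ψ` with success probability `p`. The target
`Uᵀ|ψ⟩⟨ψ|U̅` is written as `outer (ψ ᵥ* U)`, since `ψ ᵥ* U = Uᵀ ψ`. -/
def TransposesOn (S : Matrix ((Fin d × Fin d) × Fin d) ((Fin d × Fin d) × Fin d) ℂ)
    (ψ : Fin d → ℂ) (p : ℝ) : Prop :=
  ∀ U ∈ unitaryGroup (Fin d) ℂ, act S U = (p : ℂ) • outer (ψ ᵥ* U)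

lemma transposesOn_of_specialUnitaryGroup [NeZero d]
    (h : ∀ U ∈ specialUnitaryGroup (Fin d) ℂ, act S U = (p : ℂ) • (Uᵀ * outer ψ * mconj U)) :
    TransposesOn S ψ p := fun U hU => by
  obtain ⟨c, hc, hcU⟩ := exists_smul_mem_specialUnitaryGroup hU
  rw [← act_smul hc, h _ hcU, transpose_mul_outer_mul_mconj, vecMul_smul, outer_smul hc]

namespace TransposesOn

lemma star_dotProduct_mulVec (h : TransposesOn S ψ p) {U : Matrix (Fin d) (Fin d) ℂ}
    (hU : U ∈ unitaryGroup (Fin d) ℂ) (g : Fin d → ℂ) :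
    star (choiVec (mconj U) ⊗ᵥ g) ⬝ᵥ S *ᵥ (choiVec (mconj U) ⊗ᵥ g) =
      p * ((star g ⬝ᵥ ψ ᵥ* U) * (star (ψ ᵥ* U) ⬝ᵥ g)) := by
  rw [← star_dotProduct_act_mulVec, h U hU, smul_mulVec, dotProduct_smul,
    star_dotProduct_outer_mulVec, smul_eq_mul]

lemma mulVec_choiVec_mconj_eq_zero (h : TransposesOn S ψ p) (hS : S.PosSemidef)
    {U : Matrix (Fin d) (Fin d) ℂ} (hU : U ∈ unitaryGroup (Fin d) ℂ) {g : Fin d → ℂ}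
    (hg : star g ⬝ᵥ ψ ᵥ* U = 0) : S *ᵥ (choiVec (mconj U) ⊗ᵥ g) = 0 := by
  rw [← hS.dotProduct_mulVec_zero_iff, h.star_dotProduct_mulVec hU, hg, zero_mul, mul_zero]

lemma mulVec_tensorVec_vecMul_eq_zero (h : TransposesOn S ψ p) (hS : S.PosSemidef)
    {U : Matrix (Fin d) (Fin d) ℂ} (hU : U ∈ unitaryGroup (Fin d) ℂ) {ω : Fin d → ℂ}
    (hω : star ω ⬝ᵥ ω = 1) (hωψ : star ω ⬝ᵥ ψ = 0) :
    S *ᵥ (star (ω ᵥ* U) ⊗ᵥ ω ⊗ᵥ (ω ᵥ* U)) = 0 := by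
  set P := outer (star ω) with hPdef
  have hPU : P * U = vecMulVec (star ω) (ω ᵥ* U) := by
    rw [hPdef, outer, star_star, vecMulVec_mul]
  have hstarω : star (star ω) ⬝ᵥ star ω = 1 := by rwa [star_star, dotProduct_comm]
  have hR : (2 * P - 1) * U ∈ unitaryGroup (Fin d) ℂ :=
    mul_mem (isStarProjection_outer hstarω).two_mul_sub_one_mem_unitary hU
  have hψP : ψ ᵥ* ((2 * P - 1) * U) = -(ψ ᵥ* U) := by
    rw [sub_mul, one_mul, mul_assoc, hPU, two_mul, vecMul_sub, vecMul_add, vecMul_vecMulVec,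
      dotProduct_comm, hωψ, zero_smul, add_zero, zero_sub]
  have horth : star (ω ᵥ* U) ⬝ᵥ (ψ ᵥ* U) = 0 := by rw [star_vecMul_dotProduct_vecMul hU, hωψ]
  have hchoi : choiVec (mconj U) + choiVec (mconj ((2 * P - 1) * U)) =
      (2 : ℂ) • (star (ω ᵥ* U) ⊗ᵥ ω) := by
    rw [sub_mul, one_mul, mul_assoc, hPU]
    ext q
    simp only [choiVec, mconj, two_mul, vecMulVec_apply, tensorVec_apply, map_apply, Pi.add_apply,
      Pi.star_apply, Pi.smul_apply, smul_eq_mul, Matrix.sub_apply, Matrix.add_apply, map_sub,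
      map_add, map_mul, starRingEnd_apply, star_star]
    ring
  have hsum := congrArg₂ (· + ·) (h.mulVec_choiVec_mconj_eq_zero hS hU horth)
    (h.mulVec_choiVec_mconj_eq_zero hS hR (by rw [hψP, dotProduct_neg, horth, neg_zero]))
  simpa only [← mulVec_add, ← LinearMap.add_apply, ← map_add, hchoi, map_smul,
    LinearMap.smul_apply, mulVec_smul, add_zero, smul_eq_zero, two_ne_zero, false_or] using hsum

lemma mulVec_star_tensorVec_self_eq_zero (h : TransposesOn S ψ p) (hS : S.PosSemidef)
    {ω : Fin d → ℂ} (hω : star ω ⬝ᵥ ω = 1) (hωψ : star ω ⬝ᵥ ψ = 0) (a : Fin d → ℂ) :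
    S *ᵥ (star a ⊗ᵥ ω ⊗ᵥ a) = 0 := by
  obtain rfl | ha := eq_or_ne a 0
  · rw [map_zero, mulVec_zero]
  obtain ⟨r, u, hu, rfl⟩ := exists_smul_eq_of_ne_zero ha
  obtain ⟨U, hU, rfl⟩ := exists_mem_unitaryGroup_vecMul_eq hω hu
  simp only [star_smul, map_smul, LinearMap.smul_apply, mulVec_smul,
    h.mulVec_tensorVec_vecMul_eq_zero hS hU hω hωψ, smul_zero]

lemma mulVec_tensorVec_eq_zero (h : TransposesOn S ψ p) (hS : S.PosSemidef) {ω : Fin d → ℂ}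
    (hωψ : star ω ⬝ᵥ ψ = 0) (x y : Fin d → ℂ) : S *ᵥ (x ⊗ᵥ ω ⊗ᵥ y) = 0 := by
  obtain rfl | hω := eq_or_ne ω 0
  · rw [map_zero, map_zero, LinearMap.zero_apply, mulVec_zero]
  obtain ⟨r, u, hu, rfl⟩ := exists_smul_eq_of_ne_zero hω
  have huψ : star u ⬝ᵥ ψ = 0 := by
    have hr : r ≠ 0 := fun hr => hω (by rw [hr, zero_smul])
    simpa [star_smul, smul_dotProduct, hr] using hωψ
  let B : (Fin d → ℂ) →ₗ⋆[ℂ] (Fin d → ℂ) →ₗ[ℂ] ((Fin d × Fin d) × Fin d → ℂ) :=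
    LinearMap.mk₂'ₛₗ (starRingEnd ℂ) (RingHom.id ℂ) (fun a b => S *ᵥ (star a ⊗ᵥ u ⊗ᵥ b))
      (by simp [mulVec_add]) (by simp [mulVec_smul]) (by simp [mulVec_add]) (by simp [mulVec_smul])
  have hB : B = 0 := sesquilinear_eq_zero_of_isAlt fun a =>
    h.mulVec_star_tensorVec_self_eq_zero hS hu huψ a
  have hxy : S *ᵥ (star (star x) ⊗ᵥ u ⊗ᵥ y) = 0 := LinearMap.congr_fun₂ hB (star x) y
  rw [star_star] at hxy
  simp only [map_smul, LinearMap.smul_apply, mulVec_smul, hxy, smul_zero]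

lemma mulVec_choiVec_eq_zero (h : TransposesOn S ψ p) (hS : S.PosSemidef)
    {M : Matrix (Fin d) (Fin d) ℂ} (hM : star ψ ᵥ* M = 0) (g : Fin d → ℂ) :
    S *ᵥ (choiVec M ⊗ᵥ g) = 0 := by
  have hcol : ∀ j, star (M.col j) ⬝ᵥ ψ = 0 := fun j => by
    rw [star_dotProduct, ← star_zero ℂ]
    exact congrArg star (congrFun hM j)
  rw [choiVec_eq_sum, map_sum, LinearMap.sum_apply, mulVec_sum]
  exact Finset.sum_eq_zero fun j _ => h.mulVec_tensorVec_eq_zero hS (hcol j) _ g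

lemma star_dotProduct_mulVec_tensorVec (h : TransposesOn S ψ p) (hS : S.PosSemidef)
    (hψ : star ψ ⬝ᵥ ψ = 1) {e : Fin d → ℂ} (he : star e ⬝ᵥ e = 1) :
    star (star e ⊗ᵥ ψ ⊗ᵥ e) ⬝ᵥ S *ᵥ (star e ⊗ᵥ ψ ⊗ᵥ e) = p := by
  obtain ⟨U, hU, hUe⟩ := exists_mem_unitaryGroup_vecMul_eq hψ he
  set M := mconj U - vecMulVec ψ (star e) with hMdef
  have hsplit : choiVec (mconj U) ⊗ᵥ e = star e ⊗ᵥ ψ ⊗ᵥ e + choiVec M ⊗ᵥ e := by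
    have hchoi : choiVec (mconj U) = star e ⊗ᵥ ψ + choiVec M := by
      rw [← choiVec_vecMulVec]
      exact funext fun _ => (add_sub_cancel _ _).symm
    rw [hchoi, map_add, LinearMap.add_apply]
  have hM : S *ᵥ (choiVec M ⊗ᵥ e) = 0 := h.mulVec_choiVec_eq_zero hS (by
    rw [hMdef, vecMul_sub, vecMul_vecMulVec, hψ, one_smul, ← hUe, star_vecMul, ← vecMul_transpose]
    exact sub_self _) e
  rw [← star_dotProduct_mulVec_add_of_mulVec_eq_zero hS.isHermitian hM, ← hsplit,
    h.star_dotProduct_mulVec hU, hUe, he, mul_one, mul_one]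

end TransposesOn

lemma TransposesOn.ofReal_le_apply_self {σ : Matrix (Fin d) (Fin d) ℂ} (h : TransposesOn S ψ p)
    (hψ : star ψ ⬝ᵥ ψ = 1) (hS : S.PosSemidef) (hSch : (Sch - S).PosSemidef)
    (hσ : ptrRight Sch = σ ⊗ₖ (1 : Matrix (Fin d) (Fin d) ℂ)) (i : Fin d) : (p : ℂ) ≤ σ i i := by
  set e : Fin d → ℂ := Pi.single i 1 with he
  have hstar : star e = e := by rw [he, ← Pi.single_star, star_one]
  have hunit : star e ⬝ᵥ e = 1 := by rw [hstar, he, single_one_dotProduct, Pi.single_eq_same]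
  calc (p : ℂ) = star (e ⊗ᵥ ψ ⊗ᵥ Pi.single i 1) ⬝ᵥ S *ᵥ (e ⊗ᵥ ψ ⊗ᵥ Pi.single i 1) := by
        rw [← he, ← h.star_dotProduct_mulVec_tensorVec hS hψ hunit, hstar]
    _ ≤ ∑ f, star (e ⊗ᵥ ψ ⊗ᵥ Pi.single f 1) ⬝ᵥ S *ᵥ (e ⊗ᵥ ψ ⊗ᵥ Pi.single f 1) :=
        Finset.single_le_sum
          (f := fun f => star (e ⊗ᵥ ψ ⊗ᵥ Pi.single f 1) ⬝ᵥ S *ᵥ (e ⊗ᵥ ψ ⊗ᵥ Pi.single f 1))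
          (fun f _ => hS.dotProduct_mulVec_nonneg _) (Finset.mem_univ i)
    _ ≤ star e ⬝ᵥ σ *ᵥ e := sum_star_dotProduct_mulVec_le hSch hσ e hψ
    _ = σ i i := by rw [hstar, he, mulVec_single_one, single_one_dotProduct, col_apply]

lemma TransposesOn.le_one_div (h : TransposesOn S ψ p) (hψ : star ψ ⬝ᵥ ψ = 1)
    (hS : IsProtocol S Sch) : p ≤ 1 / d := by
  obtain ⟨hpos, hSch, σ, -, htr, hσ⟩ := hS
  have hsum : (d : ℂ) * p ≤ 1 := by
    calc (d : ℂ) * p = ∑ _ : Fin d, (p : ℂ) := by simp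
      _ ≤ σ.trace := Finset.sum_le_sum fun i _ => h.ofReal_le_apply_self hψ hpos hSch hσ i
      _ = 1 := htr
  have hreal : (d : ℝ) * p ≤ 1 := by exact_mod_cast hsum
  obtain rfl | hd := Nat.eq_zero_or_pos d
  · simp at htr
  rwa [le_div_iff₀' (by exact_mod_cast hd)]

end Transposition

section Optimal

variable {d : ℕ}

/-- The matrix `A_O ⊗ Φ_{IF}`, whose index order is `(I × O) × F`. -/
def tensorPhi (A : Matrix (Fin d) (Fin d) ℂ) :
    Matrix ((Fin d × Fin d) × Fin d) ((Fin d × Fin d) × Fin d) ℂ :=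
  (A ⊗ₖ Phi d).submatrix (fun x => (x.1.2, (x.1.1, x.2))) (fun x => (x.1.2, (x.1.1, x.2)))

lemma transOpt_eq_tensorPhi (ψ : Fin d → ℂ) : transOpt ψ = tensorPhi (outer ψ) := rfl

lemma tensorPhi_sub (A B : Matrix (Fin d) (Fin d) ℂ) :
    tensorPhi (A - B) = tensorPhi A - tensorPhi B := by
  ext x y
  simp only [tensorPhi, submatrix_apply, kroneckerMap_apply, Matrix.sub_apply, sub_mul]

lemma posSemidef_tensorPhi {A : Matrix (Fin d) (Fin d) ℂ} (hA : A.PosSemidef) :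
    (tensorPhi A).PosSemidef :=
  (hA.kronecker (posSemidef_outer _)).submatrix _

lemma Phi_apply (i f i' f' : Fin d) :
    Phi d (i, f) (i', f') = if i = f ∧ i' = f' then (1 / d : ℂ) else 0 := by
  have hsqrt : ((1 / Real.sqrt d : ℝ) : ℂ) * (1 / Real.sqrt d : ℝ) = 1 / d := by
    rw [← Complex.ofReal_mul, div_mul_div_comm, Real.mul_self_sqrt d.cast_nonneg]
    norm_num
  rw [Phi, outer, vecMulVec_apply, Pi.star_apply, maxEntVec, maxEntVec]
  simp only [apply_ite star, star_zero, Complex.star_def, Complex.conj_ofReal, ite_mul, mul_ite,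
    zero_mul, mul_zero, hsqrt, ite_and]
  split_ifs <;> rfl

lemma tensorPhi_apply (A : Matrix (Fin d) (Fin d) ℂ) (i o f i' o' f' : Fin d) :
    tensorPhi A ((i, o), f) ((i', o'), f') = if i = f ∧ i' = f' then A o o' / d else 0 := by
  simp [tensorPhi, Phi_apply, div_eq_mul_inv]

lemma ptrRight_tensorPhi (A : Matrix (Fin d) (Fin d) ℂ) :
    ptrRight (tensorPhi A) = ((1 / d : ℂ) • (1 : Matrix (Fin d) (Fin d) ℂ)) ⊗ₖ A := by
  ext ⟨i, o⟩ ⟨i', o'⟩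
  simp [ptrRight, tensorPhi_apply, one_apply, div_eq_inv_mul, ite_and, eq_comm]

lemma act_tensorPhi (A U : Matrix (Fin d) (Fin d) ℂ) :
    act (tensorPhi A) U = (1 / d : ℂ) • (Uᵀ * A * mconj U) := by
  ext f f'
  calc act (tensorPhi A) U f f'
      = ∑ o, ∑ o', A o o' / d * (star (U o' f') * U o f) := by
        rw [act, choiProj, ptrLeft_mul_outer_kronecker_one_apply]
        simp [tensorPhi_apply, Fintype.sum_prod_type, choiVec, mconj, ite_and]
    _ = ∑ o', ∑ o, 1 / d * (U o f * A o o' * star (U o' f')) :=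
        Finset.sum_comm.trans <| Fintype.sum_congr _ _ fun _ => Fintype.sum_congr _ _ fun _ => by
          ring
    _ = ((1 / d : ℂ) • (Uᵀ * A * mconj U)) f f' := by
        simp [mconj, mul_apply, Finset.mul_sum, Finset.sum_mul]

lemma isProtocol_tensorPhi_outer [NeZero d] {ψ : Fin d → ℂ} (hψ : star ψ ⬝ᵥ ψ = 1) :
    IsProtocol (tensorPhi (outer ψ)) (tensorPhi 1) := by
  refine ⟨posSemidef_tensorPhi (posSemidef_outer ψ), ?_, (1 / d : ℂ) • 1, ?_, ?_,
    ptrRight_tensorPhi 1⟩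
  · rw [← tensorPhi_sub]
    exact posSemidef_tensorPhi (posSemidef_one_sub_outer hψ)
  · exact PosSemidef.one.smul (by positivity)
  · rw [trace_smul, trace_one, Fintype.card_fin, smul_eq_mul,
      one_div_mul_cancel (NeZero.ne (d : ℂ))]

end Optimal

/-- **Optimal probabilistic exact unitary transposition on a known pure state,
single call.** Every protocol implementing `U ↦ p · Uᵀ|ψ⟩⟨ψ|U̅` for all `U ∈ SU(d)`
has `p ≤ 1/d`, and `S = |ψ⟩⟨ψ|_O ⊗ Φ_{IF}` achieves `p = 1/d`. -/
theorem transposition_single_call_known_pure_state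
    (d : ℕ) (hd : 2 ≤ d) (ψ : Fin d → ℂ) (hψ : star ψ ⬝ᵥ ψ = 1) :
    (∀ (S Sch : Matrix ((Fin d × Fin d) × Fin d) ((Fin d × Fin d) × Fin d) ℂ) (p : ℝ),
        IsProtocol S Sch →
        (∀ U : Matrix (Fin d) (Fin d) ℂ, U ∈ Matrix.specialUnitaryGroup (Fin d) ℂ →
          act S U = (p : ℂ) • (Uᵀ * outer ψ * mconj U)) →
        p ≤ 1 / d) ∧
    (∃ Sch, IsProtocol (transOpt ψ) Sch ∧
        ∀ U : Matrix (Fin d) (Fin d) ℂ, U ∈ Matrix.specialUnitaryGroup (Fin d) ℂ →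
          act (transOpt ψ) U = ((1 / d : ℝ) : ℂ) • (Uᵀ * outer ψ * mconj U)) := by
  have : NeZero d := ⟨by omega⟩
  rw [transOpt_eq_tensorPhi]
  refine ⟨fun S Sch p hS h => (transposesOn_of_specialUnitaryGroup h).le_one_div hψ hS,
    tensorPhi 1, isProtocol_tensorPhi_outer hψ, fun U _ => ?_⟩
  rw [Complex.ofReal_div, Complex.ofReal_one, Complex.ofReal_natCast, act_tensorPhi]
end
end

section
/- Fix integers d ≥ 2 and m ≥ 1 and a unit vector ψ ∈ ℂ^m ⊗ ℂ^d, and let σ_B := Tr_A(|ψ⟩⟨ψ|) be the reduced state obtained by tracing out the first (ℂ^m) factor. Consider bipartite single-call probabilistic protocols (S, S_ch), together with p ∈ ℝ, satisfying S ⋆ U = p · (1_m ⊗ Uᵀ)|ψ⟩⟨ψ|(1_m ⊗ Uᵀ)† for all U ∈ SU(d) (exact probabilistic unitary transposition on one part of the known bipartite pure state ψ). Then every such protocol satisfies p ≤ 1/(d · λ_max(σ_B)), and this bound is attained by some protocol; i.e. the maximal success probability equals 1/(d · λ_max(σ_B)). -/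
open Matrix Kronecker BigOperators ComplexOrder

noncomputable section

/-- Action `S ⋆ U := Tr_{IO}[ S · (|U̅⟩⟩⟨⟨U̅|_{IO} ⊗ 1_{AF}) ]` of a bipartite
single-call supermap `S` on `I ⊗ O ⊗ A ⊗ F`, applied to the unitary channel `U`. -/
def actB {d m : ℕ}
    (S : Matrix ((Fin d × Fin d) × (Fin m × Fin d)) ((Fin d × Fin d) × (Fin m × Fin d)) ℂ)
    (U : Matrix (Fin d) (Fin d) ℂ) : Matrix (Fin m × Fin d) (Fin m × Fin d) ℂ :=
  ptrLeft (S * (choiProj (mconj U) ⊗ₖ (1 : Matrix (Fin m × Fin d) (Fin m × Fin d) ℂ)))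

/-- A bipartite single-call probabilistic protocol (auxiliary output dimension `m`):
`0 ≤ S ≤ S_ch` with `Tr_{AF}(S_ch) = σ ⊗ 1_d`, `σ ≥ 0`, `Tr σ = 1`. -/
def IsProtocolB {d m : ℕ}
    (S Sch : Matrix ((Fin d × Fin d) × (Fin m × Fin d)) ((Fin d × Fin d) × (Fin m × Fin d)) ℂ) :
    Prop :=
  S.PosSemidef ∧ (Sch - S).PosSemidef ∧
    ∃ σ : Matrix (Fin d) (Fin d) ℂ, σ.PosSemidef ∧ σ.trace = 1 ∧
      ptrRight Sch = σ ⊗ₖ (1 : Matrix (Fin d) (Fin d) ℂ)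

/-- Largest eigenvalue of a matrix: the supremum of the real parts of its spectrum
(for a positive semidefinite matrix this is the maximal eigenvalue, i.e. the
operator norm). -/
def lamMax {n : ℕ} (M : Matrix (Fin n) (Fin n) ℂ) : ℝ :=
  sSup (Complex.re '' spectrum ℂ M)

/-!
Contracting a Kraus vector `v` of `S` with the Choi vector of `U` gives a linear map in `U` which,
for `U ∈ SU(d)`, is parallel to the target `(1 ⊗ Uᵀ)ψ`. Parallelism is a system of quadratic
equations in `U`, and a quadratic form vanishing on `SU(d)` is zero: it vanishes on `U(d)` by
homogeneity, hence at `V diag(z) V†` for `V ∈ U(d)` and all complex `z` because the unit circle is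
infinite, hence at all Hermitian matrices, hence everywhere by polarization. Two linear maps that
are everywhere parallel are proportional, so `S = p |s⟩⟨s|` where `s` is the tensor product of the
Choi vector of the identity on `I ⊗ F` and `ψ` on `A ⊗ O`.

Tracing out `A ⊗ F` turns `S ≤ S_ch` into `p (1 ⊗ σ_B) ≤ σ ⊗ 1`, and tracing out `I` as well gives
`p d σ_B ≤ 1`. Conversely, `σ = 1/d` satisfies the former inequality as soon as `p d σ_B ≤ 1`.
-/

section QuadraticForms

open scoped ComplexConjugate

theorem quadraticForm_eq_zero_of_forall_norm_eq_one {ι : Type*} [Finite ι]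
    {Q : QuadraticForm ℂ (ι → ℂ)} (h : ∀ u : ι → ℂ, (∀ i, ‖u i‖ = 1) → Q u = 0) : Q = 0 := by
  classical
  cases nonempty_fintype ι
  let P : MvPolynomial ι ℂ := ∑ i, ∑ j,
    MvPolynomial.X i * MvPolynomial.X j * MvPolynomial.C (Q.toMatrix' i j)
  have eval_P (u : ι → ℂ) : MvPolynomial.eval u P = Q u := by
    have hQ := congrArg (fun B => B u u) (Matrix.toLinearMap₂'_toMatrix' (R := ℂ) Q.associated)
    simp only [Matrix.toLinearMap₂'_apply, QuadraticMap.associated_eq_self_apply] at hQ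
    simpa [P, QuadraticForm.toMatrix', mul_assoc] using hQ
  have circle_infinite : (Metric.sphere (0 : ℂ) 1).Infinite :=
    (isPreconnected_sphere (by simp [Complex.rank_real_complex]) 0 1).infinite_of_nontrivial
      ⟨1, by simp, -1, by simp, by norm_num [eq_neg_iff_add_eq_zero]⟩
  have P_eq_zero : P = 0 :=
    MvPolynomial.funext_set (fun _ => Metric.sphere 0 1) (fun _ => circle_infinite) fun u hu => by
      rw [eval_P, map_zero, h u fun i => mem_sphere_zero_iff_norm.1 (hu i trivial)]
  ext u
  rw [← eval_P, P_eq_zero, map_zero, _root_.zero_apply]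

theorem quadraticMap_eq_zero_of_forall_isSelfAdjoint {A N : Type*} [AddCommGroup A] [Module ℂ A]
    [StarAddMonoid A] [StarModule ℂ A] [AddCommGroup N] [Module ℂ N] {Q : QuadraticMap ℂ A N}
    (h : ∀ x, IsSelfAdjoint x → Q x = 0) : Q = 0 := by
  ext x
  have hre : IsSelfAdjoint (realPart x : A) := (realPart x).2
  have him : IsSelfAdjoint (imaginaryPart x : A) := (imaginaryPart x).2
  have polar_eq_zero : QuadraticMap.polar Q (realPart x : A) (imaginaryPart x : A) = 0 := by
    rw [QuadraticMap.polar, h _ (hre.add him), h _ hre, h _ him, sub_zero, sub_zero]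
  rw [← realPart_add_I_smul_imaginaryPart x, QuadraticMap.map_add Q, QuadraticMap.map_smul,
    QuadraticMap.polar_smul_right, h _ hre, h _ him, polar_eq_zero]
  simp

variable {n : Type*} [Fintype n] [DecidableEq n]

theorem exists_smul_mem_specialUnitaryGroup_s1 [Nonempty n] {W : Matrix n n ℂ}
    (hW : W ∈ Matrix.unitaryGroup n ℂ) :
    ∃ z : ℂ, z ≠ 0 ∧ z • W ∈ Matrix.specialUnitaryGroup n ℂ := by
  have hdet : ‖W.det‖ = 1 := CStarRing.norm_of_mem_unitary (Matrix.det_of_mem_unitary hW)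
  obtain ⟨z, hz⟩ := IsAlgClosed.exists_pow_nat_eq (conj W.det) (Fintype.card_pos (α := n))
  have hz_norm : ‖z‖ = 1 := by
    rw [← pow_eq_one_iff_of_nonneg (norm_nonneg z) (Fintype.card_ne_zero (α := n)), ← norm_pow, hz,
      RCLike.norm_conj, hdet]
  refine ⟨z, norm_ne_zero_iff.1 (by simp [hz_norm]), Matrix.mem_specialUnitaryGroup_iff.2 ⟨?_, ?_⟩⟩
  · rw [Matrix.mem_unitaryGroup_iff] at hW ⊢
    rw [star_smul, smul_mul_smul_comm, hW, Complex.star_def, Complex.mul_conj', hz_norm]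
    simp
  · rw [Matrix.det_smul, hz, Complex.conj_mul', hdet]
    simp

theorem quadraticForm_eq_zero_of_forall_mem_unitaryGroup {Q : QuadraticForm ℂ (Matrix n n ℂ)}
    (h : ∀ U ∈ Matrix.unitaryGroup n ℂ, Q U = 0) : Q = 0 := by
  refine quadraticMap_eq_zero_of_forall_isSelfAdjoint fun H (hH : H.IsHermitian) => ?_
  set V := hH.eigenvectorUnitary
  let conjDiagonal : (n → ℂ) →ₗ[ℂ] Matrix n n ℂ :=
    LinearMap.mulLeftRight ℂ ((V : Matrix n n ℂ), star (V : Matrix n n ℂ)) ∘ₗ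
      Matrix.diagonalLinearMap n ℂ ℂ
  have conjDiagonal_mem (u : n → ℂ) (hu : ∀ i, ‖u i‖ = 1) :
      conjDiagonal u ∈ Matrix.unitaryGroup n ℂ := by
    have hdiag : diagonal u ∈ Matrix.unitaryGroup n ℂ := by
      rw [Matrix.mem_unitaryGroup_iff, Matrix.star_eq_conjTranspose,
        Matrix.diagonal_conjTranspose, Matrix.diagonal_mul_diagonal, ← Matrix.diagonal_one]
      congr with i
      simp [Complex.mul_conj', hu i]
    exact mul_mem (mul_mem V.2 hdiag) (Unitary.star_mem V.2)
  have hQ : Q.comp conjDiagonal = 0 :=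
    quadraticForm_eq_zero_of_forall_norm_eq_one fun u hu => h _ (conjDiagonal_mem u hu)
  rw [hH.spectral_theorem, Unitary.conjStarAlgAut_apply]
  exact DFunLike.congr_fun hQ _

theorem quadraticForm_eq_zero_of_forall_mem_specialUnitaryGroup [Nonempty n]
    {Q : QuadraticForm ℂ (Matrix n n ℂ)}
    (h : ∀ U ∈ Matrix.specialUnitaryGroup n ℂ, Q U = 0) : Q = 0 := by
  refine quadraticForm_eq_zero_of_forall_mem_unitaryGroup fun W hW => ?_
  obtain ⟨z, hz, hzW⟩ := exists_smul_mem_specialUnitaryGroup_s1 hW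
  simpa [QuadraticMap.map_smul, hz] using h _ hzW

end QuadraticForms

section ParallelMaps

variable {K V ι : Type*} [Field K] [AddCommGroup V] [Module K V]

theorem exists_eq_smul_of_mul_comm {v w : ι → K} (hw : w ≠ 0)
    (h : ∀ i j, v i * w j = v j * w i) : ∃ c : K, v = c • w := by
  obtain ⟨j, hj : w j ≠ 0⟩ := Function.ne_iff.1 hw
  refine ⟨v j / w j, funext fun i => ?_⟩
  rw [Pi.smul_apply, smul_eq_mul, div_mul_eq_mul_div, eq_div_iff hj, h]

theorem exists_eq_smul_of_apply_mul_comm {L T : V →ₗ[K] ι → K} {x y : V}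
    (hxy : LinearIndependent K ![T x, T y])
    (h : ∀ z i j, L z i * T z j = L z j * T z i) : ∃ c : K, L = c • T := by
  have polarized (z w : V) (i j : ι) :
      L z i * T w j + L w i * T z j = L z j * T w i + L w j * T z i := by
    have := h (z + w) i j
    simp only [map_add, Pi.add_apply] at this
    linear_combination this - h z i j - h w i j
  -- `L = a T` at `x`, `L = b T` at `y`; polarization forces `a = b`, and then `L z - a T z` is
  -- parallel to both `T x` and `T y`, hence zero.
  have hTx : T x ≠ 0 := hxy.ne_zero 0
  have hTy : T y ≠ 0 := hxy.ne_zero 1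
  obtain ⟨a, ha⟩ := exists_eq_smul_of_mul_comm hTx (h x)
  obtain ⟨b, hb⟩ := exists_eq_smul_of_mul_comm hTy (h y)
  rw [LinearIndependent.pair_iff] at hxy
  have hab : a = b := by
    by_contra hne
    obtain ⟨c, hc⟩ := exists_eq_smul_of_mul_comm (v := T x) hTy fun i j => by
      have := polarized x y i j
      simp only [ha, hb, Pi.smul_apply, smul_eq_mul] at this
      exact mul_left_cancel₀ (sub_ne_zero.2 hne) (by linear_combination this)
    exact one_ne_zero (hxy 1 (-c) (by rw [one_smul, neg_smul, ← hc, add_neg_cancel])).1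
  subst hab
  refine ⟨a, LinearMap.ext fun z => ?_⟩
  have parallel (w : V) (hw : L w = a • T w) (i j : ι) :
      (L z - a • T z) i * T w j = (L z - a • T z) j * T w i := by
    have := polarized z w i j
    simp only [hw, Pi.smul_apply, smul_eq_mul, Pi.sub_apply] at this ⊢
    linear_combination this
  obtain ⟨s, hs⟩ := exists_eq_smul_of_mul_comm hTx (parallel x ha)
  obtain ⟨t, ht⟩ := exists_eq_smul_of_mul_comm hTy (parallel y hb)
  have hs0 : s = 0 := (hxy s (-t) (by rw [neg_smul, ← hs, ← ht, add_neg_cancel])).1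
  rwa [hs0, zero_smul, sub_eq_zero] at hs

end ParallelMaps

section PartialTrace

variable {α β ι : Type*}

theorem outer_posSemidef [Finite α] (v : α → ℂ) : (outer v).PosSemidef :=
  Matrix.posSemidef_vecMulVec_self_star v

theorem trace_outer [Fintype α] (v : α → ℂ) : (outer v).trace = star v ⬝ᵥ v := by
  rw [outer, Matrix.trace_vecMulVec, dotProduct_comm]

theorem outer_mulVec [Fintype β] (A : Matrix α β ℂ) (v : β → ℂ) :
    outer (A *ᵥ v) = A * outer v * Aᴴ := by
  rw [outer, outer, Matrix.mul_vecMulVec, Matrix.vecMulVec_mul, Matrix.star_mulVec]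

theorem mul_comm_of_sum_outer_eq_smul_outer [Finite α] [Fintype ι] {w : ι → α → ℂ}
    {c : ℂ} {t : α → ℂ} (h : ∑ k, outer (w k) = c • outer t) (k : ι) (i j : α) :
    w k i * t j = w k j * t i := by
  classical
  cases nonempty_fintype α
  -- Testing the identity against `star z` annihilates the right-hand side, as `t ⬝ᵥ z = 0`.
  let z : α → ℂ := Pi.single i (t j) - Pi.single j (t i)
  have dot_z (v : α → ℂ) : v ⬝ᵥ z = v i * t j - v j * t i := by
    simp [z, dotProduct_sub]
  have expectation (v : α → ℂ) : star (star z) ⬝ᵥ outer v *ᵥ star z = ‖v ⬝ᵥ z‖ ^ 2 := by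
    rw [outer, Matrix.vecMulVec_mulVec, star_star, ← Complex.mul_conj']
    simp [Matrix.star_dotProduct_star, dotProduct_comm z, mul_comm]
  have sum_eq_zero : ∑ k, ‖w k ⬝ᵥ z‖ ^ 2 = 0 := by
    have := congrArg (fun M => star (star z) ⬝ᵥ M *ᵥ star z) h
    simp only [Matrix.sum_mulVec, dotProduct_sum, Matrix.smul_mulVec, dotProduct_smul,
      expectation, dot_z t, mul_comm (t i), sub_self, norm_zero, Complex.ofReal_zero,
      zero_pow two_ne_zero, smul_zero] at this
    exact_mod_cast this
  have := (Finset.sum_eq_zero_iff_of_nonneg fun _ _ => by positivity).1 sum_eq_zero k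
    (Finset.mem_univ k)
  rwa [sq_eq_zero_iff, norm_eq_zero, dot_z, sub_eq_zero] at this

theorem ptrLeft_posSemidef [Fintype α] {M : Matrix (α × β) (α × β) ℂ} (hM : M.PosSemidef) :
    (ptrLeft M).PosSemidef := by
  have : ptrLeft M = ∑ a, M.submatrix (Prod.mk a) (Prod.mk a) := by
    ext; simp [ptrLeft, Matrix.sum_apply]
  rw [this]
  exact Matrix.posSemidef_sum _ fun a _ => hM.submatrix _

theorem ptrRight_posSemidef [Fintype β] {M : Matrix (α × β) (α × β) ℂ} (hM : M.PosSemidef) :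
    (ptrRight M).PosSemidef := by
  have : ptrRight M = ∑ b, M.submatrix (·, b) (·, b) := by
    ext; simp [ptrRight, Matrix.sum_apply]
  rw [this]
  exact Matrix.posSemidef_sum _ fun b _ => hM.submatrix _

theorem trace_ptrLeft [Fintype α] [Fintype β] (M : Matrix (α × β) (α × β) ℂ) :
    (ptrLeft M).trace = M.trace := by
  simp only [ptrLeft, Matrix.trace, Matrix.diag, Fintype.sum_prod_type_right]

theorem ptrLeft_sub [Fintype α] (M N : Matrix (α × β) (α × β) ℂ) :
    ptrLeft (M - N) = ptrLeft M - ptrLeft N := by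
  ext; simp [ptrLeft]

theorem ptrLeft_smul [Fintype α] (c : ℂ) (M : Matrix (α × β) (α × β) ℂ) :
    ptrLeft (c • M) = c • ptrLeft M := by
  ext; simp [ptrLeft, Finset.mul_sum]

theorem ptrLeft_kronecker [Fintype α] (A : Matrix α α ℂ) (B : Matrix β β ℂ) :
    ptrLeft (A ⊗ₖ B) = A.trace • B := by
  ext; simp [ptrLeft, Matrix.trace, Finset.sum_mul]

theorem ptrRight_add [Fintype β] (M N : Matrix (α × β) (α × β) ℂ) :
    ptrRight (M + N) = ptrRight M + ptrRight N := by
  ext; simp [ptrRight, Finset.sum_add_distrib]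

theorem ptrRight_sub [Fintype β] (M N : Matrix (α × β) (α × β) ℂ) :
    ptrRight (M - N) = ptrRight M - ptrRight N := by
  ext; simp [ptrRight]

theorem ptrRight_smul [Fintype β] (c : ℂ) (M : Matrix (α × β) (α × β) ℂ) :
    ptrRight (c • M) = c • ptrRight M := by
  ext; simp [ptrRight, Finset.mul_sum]

theorem ptrRight_kronecker [Fintype β] (A : Matrix α α ℂ) (B : Matrix β β ℂ) :
    ptrRight (A ⊗ₖ B) = B.trace • A := by
  ext; simp [ptrRight, Matrix.trace, Finset.sum_mul, mul_comm (A _ _)]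

end PartialTrace

section LargestEigenvalue

variable {n : ℕ} {M : Matrix (Fin n) (Fin n) ℂ}

theorem lamMax_eq_iSup_eigenvalues (hM : M.IsHermitian) : lamMax M = ⨆ i, hM.eigenvalues i := by
  rw [lamMax, hM.spectrum_eq_image_range, ← Set.range_comp, ← Set.range_comp, iSup]
  rfl

theorem eigenvalues_le_lamMax (hM : M.IsHermitian) (i : Fin n) : hM.eigenvalues i ≤ lamMax M := by
  rw [lamMax_eq_iSup_eigenvalues hM]
  exact le_ciSup (Finite.bddAbove_range _) i

theorem lamMax_smul_one_sub_posSemidef (hM : M.IsHermitian) :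
    ((lamMax M : ℂ) • (1 : Matrix (Fin n) (Fin n) ℂ) - M).PosSemidef := by
  rw [Matrix.posSemidef_iff_isHermitian_and_spectrum_nonneg]
  refine ⟨((Matrix.isHermitian_one).smul (Complex.conj_ofReal _)).sub hM, ?_⟩
  rw [← Algebra.algebraMap_eq_smul_one, ← spectrum.singleton_sub_eq,
    hM.spectrum_eq_image_range, ← Set.range_comp]
  rintro _ ⟨_, rfl, _, ⟨i, rfl⟩, rfl⟩
  have := eigenvalues_le_lamMax hM i
  simpa [← Complex.ofReal_sub] using this

theorem mul_lamMax_le_of_posSemidef [NeZero n] (hM : M.IsHermitian) {a t : ℝ}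
    (h : ((a : ℂ) • (1 : Matrix (Fin n) (Fin n) ℂ) - (t : ℂ) • M).PosSemidef) :
    t * lamMax M ≤ a := by
  obtain ⟨i, hi⟩ := exists_eq_ciSup_of_finite (f := hM.eigenvalues)
  rw [lamMax_eq_iSup_eigenvalues hM, ← hi]
  have unit : star ⇑(hM.eigenvectorBasis i) ⬝ᵥ ⇑(hM.eigenvectorBasis i) = 1 := by
    rw [dotProduct_comm, ← EuclideanSpace.inner_eq_star_dotProduct,
      inner_self_eq_norm_sq_to_K, hM.eigenvectorBasis.norm_eq_one]
    simp
  have nonneg := h.re_dotProduct_nonneg ⇑(hM.eigenvectorBasis i)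
  rw [Matrix.sub_mulVec, Matrix.smul_mulVec, Matrix.smul_mulVec, Matrix.one_mulVec,
    hM.mulVec_eigenvectorBasis, dotProduct_sub, dotProduct_smul, dotProduct_smul, dotProduct_smul,
    unit] at nonneg
  simpa using nonneg

theorem trace_re_le_mul_lamMax (hM : M.IsHermitian) : M.trace.re ≤ n * lamMax M := by
  rw [hM.trace_eq_sum_eigenvalues]
  have := Finset.sum_le_card_nsmul Finset.univ _ _ fun i _ => eigenvalues_le_lamMax hM i
  simpa using this

end LargestEigenvalue

section ChoiContraction

variable {n α β : Type*} [Fintype n]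

/-- The contraction `⟨⟨U̅| v` of the first factor of `v` with a Choi vector, bilinear in `v`
and `U`. If `v` is a Kraus vector of a supermap, this is a Kraus vector of its output on `U`. -/
def contractChoi : ((n × n) × β → ℂ) →ₗ[ℂ] Matrix n n ℂ →ₗ[ℂ] (β → ℂ) :=
  LinearMap.mk₂ ℂ (fun v U b => ∑ x, U x.2 x.1 * v (x, b))
    (fun _ _ _ => by ext; simp [mul_add, Finset.sum_add_distrib])
    (fun _ _ _ => by ext; simp [Finset.mul_sum, mul_left_comm])
    (fun _ _ _ => by ext; simp [add_mul, Finset.sum_add_distrib])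
    (fun _ _ _ => by ext; simp [Finset.mul_sum, mul_assoc])

theorem contractChoi_apply (v : (n × n) × β → ℂ) (U : Matrix n n ℂ) (b : β) :
    contractChoi v U b = ∑ x : n × n, U x.2 x.1 * v (x, b) := rfl

theorem contractChoi_injective :
    Function.Injective (contractChoi : ((n × n) × β → ℂ) →ₗ[ℂ] Matrix n n ℂ →ₗ[ℂ] (β → ℂ)) := by
  classical
  intro v w h
  have contract_single (v : (n × n) × β → ℂ) (i o : n) (b : β) :
      contractChoi v (Matrix.single o i 1) b = v ((i, o), b) := by
    rw [contractChoi_apply, Finset.sum_eq_single (i, o)]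
    · simp
    · rintro ⟨i', o'⟩ - hne
      rw [Matrix.single_apply_of_ne _ _ _ _ _ fun hx => hne (by rw [hx.1, hx.2]), zero_mul]
    · simp
  ext ⟨⟨i, o⟩, b⟩
  rw [← contract_single v, ← contract_single w, h]

/-- The vector `|1⟩⟩ ⊗ |ψ⟩` with the factors of `|1⟩⟩` placed on `I`, `F` and those of `ψ` on
`A`, `O`; the optimal protocol is a multiple of its projector. -/
def transposeVec [DecidableEq n] (ψ : α × n → ℂ) : (n × n) × (α × n) → ℂ :=
  fun z => if z.1.1 = z.2.2 then ψ (z.2.1, z.1.2) else 0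

theorem contractChoi_transposeVec_apply [DecidableEq n] (ψ : α × n → ℂ) (U : Matrix n n ℂ)
    (a : α) (i : n) : contractChoi (transposeVec ψ) U (a, i) = ∑ o, U o i * ψ (a, o) := by
  simp [contractChoi_apply, transposeVec, Fintype.sum_prod_type_right]

theorem contractChoi_transposeVec [DecidableEq n] [Fintype α] [DecidableEq α] (ψ : α × n → ℂ)
    (U : Matrix n n ℂ) :
    contractChoi (transposeVec ψ) U = ((1 : Matrix α α ℂ) ⊗ₖ Uᵀ) *ᵥ ψ := by
  ext ⟨a, i⟩
  simp [contractChoi_transposeVec_apply, Matrix.mulVec, dotProduct, Fintype.sum_prod_type,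
    Matrix.one_apply]

theorem exists_linearIndependent_contractChoi_transposeVec [DecidableEq n] [Nontrivial n]
    {ψ : α × n → ℂ} (hψ : ψ ≠ 0) :
    ∃ X Y : Matrix n n ℂ, LinearIndependent ℂ
      ![contractChoi (transposeVec ψ) X, contractChoi (transposeVec ψ) Y] := by
  obtain ⟨⟨a, o⟩, hψao : ψ (a, o) ≠ 0⟩ := Function.ne_iff.1 hψ
  obtain ⟨i, j, hij⟩ := exists_pair_ne n
  have contract_single (k l : n) : contractChoi (transposeVec ψ) (Matrix.single o k 1) (a, l) =
      if k = l then ψ (a, o) else 0 := by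
    simp [contractChoi_transposeVec_apply, Matrix.single_apply, ite_and]
  refine ⟨Matrix.single o i 1, Matrix.single o j 1, LinearIndependent.pair_iff.2 fun s t hst => ?_⟩
  have at_i := congrFun hst (a, i)
  have at_j := congrFun hst (a, j)
  simp only [Pi.add_apply, Pi.smul_apply, contract_single] at at_i at_j
  simpa [hij, hij.symm, hψao] using And.intro at_i at_j

theorem ptrRight_outer_transposeVec [DecidableEq n] [Fintype α] (ψ : α × n → ℂ) :
    ptrRight (outer (transposeVec ψ)) = (1 : Matrix n n ℂ) ⊗ₖ ptrLeft (outer ψ) := by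
  ext ⟨i, o⟩ ⟨i', o'⟩
  by_cases hi : i = i' <;>
    simp [ptrRight, ptrLeft, outer, Matrix.vecMulVec_apply, transposeVec, Fintype.sum_prod_type, hi,
      eq_comm (a := i')]

end ChoiContraction

section Supermaps

variable {d m : ℕ}
  {S Sch : Matrix ((Fin d × Fin d) × (Fin m × Fin d)) ((Fin d × Fin d) × (Fin m × Fin d)) ℂ}

theorem actB_outer (v : (Fin d × Fin d) × (Fin m × Fin d) → ℂ) (U : Matrix (Fin d) (Fin d) ℂ) :
    actB (outer v) U = outer (contractChoi v U) := by
  ext b b'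
  calc actB (outer v) U b b'
      = ∑ x, ∑ y, v (x, b) * star (v (y, b')) * (star (U y.2 y.1) * U x.2 x.1) := by
        simp [actB, ptrLeft, choiProj, choiVec, mconj, outer, Matrix.mul_apply,
          Matrix.vecMulVec_apply, Fintype.sum_prod_type (α₁ := Fin d × Fin d), Matrix.one_apply]
    _ = (∑ x, U x.2 x.1 * v (x, b)) * ∑ y, star (U y.2 y.1 * v (y, b')) := by
        simp only [Finset.sum_mul_sum, star_mul']
        exact Finset.sum_congr rfl fun x _ => Finset.sum_congr rfl fun y _ => by ring
    _ = outer (contractChoi v U) b b' := by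
        simp only [outer, Matrix.vecMulVec_apply, Pi.star_apply, contractChoi_apply, star_sum]

theorem actB_sum {ι : Type*} (s : Finset ι)
    (S : ι → Matrix ((Fin d × Fin d) × (Fin m × Fin d)) ((Fin d × Fin d) × (Fin m × Fin d)) ℂ)
    (U : Matrix (Fin d) (Fin d) ℂ) : actB (∑ k ∈ s, S k) U = ∑ k ∈ s, actB (S k) U := by
  ext b b'
  simp only [actB, ptrLeft, Finset.sum_mul, Matrix.sum_apply]
  exact Finset.sum_comm

theorem actB_smul (c : ℂ) (U : Matrix (Fin d) (Fin d) ℂ) : actB (c • S) U = c • actB S U := by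
  rw [actB, Matrix.smul_mul, ptrLeft_smul, actB]

theorem exists_eq_smul_outer_of_actB_eq [NeZero d] (hS : S.PosSemidef)
    {s : (Fin d × Fin d) × (Fin m × Fin d) → ℂ} {X Y : Matrix (Fin d) (Fin d) ℂ}
    (hXY : LinearIndependent ℂ ![contractChoi s X, contractChoi s Y]) {c : ℂ}
    (h : ∀ U ∈ Matrix.specialUnitaryGroup (Fin d) ℂ, actB S U = c • outer (contractChoi s U)) :
    ∃ q : ℂ, S = q • outer s := by
  obtain ⟨r, v, hv : S = ∑ k, outer (v k)⟩ := Matrix.posSemidef_iff_eq_sum_vecMulVec.1 hS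
  have parallel (k : Fin r) (Z : Matrix (Fin d) (Fin d) ℂ) (i j : Fin m × Fin d) :
      contractChoi (v k) Z i * contractChoi s Z j =
        contractChoi (v k) Z j * contractChoi s Z i := by
    let coord (w : (Fin d × Fin d) × (Fin m × Fin d) → ℂ) (i : Fin m × Fin d) :
        Matrix (Fin d) (Fin d) ℂ →ₗ[ℂ] ℂ := LinearMap.proj i ∘ₗ contractChoi w
    have minor_eq_zero : QuadraticMap.linMulLin (coord (v k) i) (coord s j) -
        QuadraticMap.linMulLin (coord (v k) j) (coord s i) = 0 := by
      refine quadraticForm_eq_zero_of_forall_mem_specialUnitaryGroup fun U hU => sub_eq_zero.2 ?_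
      have sum_outer : ∑ k, outer (contractChoi (v k) U) = c • outer (contractChoi s U) := by
        simp only [← h U hU, hv, actB_sum, actB_outer]
      exact mul_comm_of_sum_outer_eq_smul_outer sum_outer k i j
    exact sub_eq_zero.1 (DFunLike.congr_fun minor_eq_zero Z)
  have kraus_eq_smul (k : Fin r) : ∃ a : ℂ, v k = a • s := by
    obtain ⟨a, ha⟩ := exists_eq_smul_of_apply_mul_comm hXY (parallel k)
    exact ⟨a, contractChoi_injective (by rw [ha, map_smul])⟩
  choose a ha using kraus_eq_smul
  refine ⟨∑ k, a k * star (a k), ?_⟩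
  rw [hv, Finset.sum_smul]
  refine Finset.sum_congr rfl fun k _ => ?_
  rw [ha k, outer, star_smul, Matrix.smul_vecMulVec, Matrix.vecMulVec_smul, smul_smul, outer]

theorem eq_smul_outer_transposeVec_of_actB_eq (hd : 2 ≤ d) {ψ : Fin m × Fin d → ℂ} (hψ : ψ ≠ 0)
    (hS : S.PosSemidef) {p : ℂ}
    (h : ∀ U ∈ Matrix.specialUnitaryGroup (Fin d) ℂ,
      actB S U = p • outer (contractChoi (transposeVec ψ) U)) :
    S = p • outer (transposeVec ψ) := by
  have : Nontrivial (Fin d) := Fin.nontrivial_iff_two_le.2 hd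
  have : NeZero d := ⟨by omega⟩
  obtain ⟨X, Y, hXY⟩ := exists_linearIndependent_contractChoi_transposeVec hψ
  obtain ⟨q, rfl⟩ := exists_eq_smul_outer_of_actB_eq hS hXY h
  have at_one := h 1 (one_mem _)
  have contract_one : contractChoi (transposeVec ψ) (1 : Matrix (Fin d) (Fin d) ℂ) = ψ := by
    rw [contractChoi_transposeVec, Matrix.transpose_one, Matrix.one_kronecker_one,
      Matrix.one_mulVec]
  have outer_ne_zero : outer ψ ≠ 0 := by
    simpa [outer, Matrix.vecMulVec_eq_zero] using hψ
  rw [actB_smul, actB_outer, contract_one] at at_one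
  rw [smul_left_injective ℂ outer_ne_zero at_one]

theorem IsProtocolB.exists_kronecker_sub_posSemidef (h : IsProtocolB S Sch) :
    ∃ σ : Matrix (Fin d) (Fin d) ℂ, σ.PosSemidef ∧ σ.trace = 1 ∧
      (σ ⊗ₖ (1 : Matrix (Fin d) (Fin d) ℂ) - ptrRight S).PosSemidef := by
  obtain ⟨-, hle, σ, hσ, hσ_trace, hSch⟩ := h
  refine ⟨σ, hσ, hσ_trace, ?_⟩
  rw [← hSch, ← ptrRight_sub]
  exact ptrRight_posSemidef hle

theorem exists_isProtocolB_of_kronecker_sub_posSemidef [Nonempty (Fin m × Fin d)]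
    (hS : S.PosSemidef) {σ : Matrix (Fin d) (Fin d) ℂ} (hσ : σ.PosSemidef) (hσ_trace : σ.trace = 1)
    (h : (σ ⊗ₖ (1 : Matrix (Fin d) (Fin d) ℂ) - ptrRight S).PosSemidef) :
    ∃ Sch, IsProtocolB S Sch := by
  -- Complete `S` by discarding the input and preparing an arbitrary fixed state.
  let fixedState := outer (Pi.single (Classical.arbitrary (Fin m × Fin d)) (1 : ℂ))
  have fixedState_trace : fixedState.trace = 1 := by
    simp [fixedState, trace_outer]
  refine ⟨S + (σ ⊗ₖ 1 - ptrRight S) ⊗ₖ fixedState, hS, ?_, σ, hσ, hσ_trace, ?_⟩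
  · rw [add_sub_cancel_left]
    exact h.kronecker (outer_posSemidef _)
  · rw [ptrRight_add, ptrRight_kronecker, fixedState_trace, one_smul, add_sub_cancel]

theorem IsProtocolB.mul_lamMax_le_one [NeZero d] {ψ : Fin m × Fin d → ℂ} {p : ℝ}
    (h : IsProtocolB ((p : ℂ) • outer (transposeVec ψ)) Sch) :
    p * (d * lamMax (ptrLeft (outer ψ))) ≤ 1 := by
  obtain ⟨σ, -, hσ, hle⟩ := h.exists_kronecker_sub_posSemidef
  have reduced := ptrLeft_posSemidef hle
  rw [ptrRight_smul, ptrRight_outer_transposeVec, ptrLeft_sub, ptrLeft_smul, ptrLeft_kronecker,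
    ptrLeft_kronecker, hσ, Matrix.trace_one, Fintype.card_fin, smul_smul] at reduced
  rw [← mul_assoc]
  exact mul_lamMax_le_of_posSemidef (ptrLeft_posSemidef (outer_posSemidef ψ)).isHermitian
    (by exact_mod_cast reduced)

theorem exists_isProtocolB_smul_outer_transposeVec [NeZero m] [NeZero d]
    {ψ : Fin m × Fin d → ℂ} (hpos : 0 < lamMax (ptrLeft (outer ψ))) :
    ∃ Sch, IsProtocolB
      (((1 / (d * lamMax (ptrLeft (outer ψ))) : ℝ) : ℂ) • outer (transposeVec ψ)) Sch := by
  have hτ := (ptrLeft_posSemidef (outer_posSemidef ψ)).isHermitian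
  set τ := ptrLeft (outer ψ)
  set p : ℝ := 1 / (d * lamMax τ) with hp_def
  have hp : (0 : ℂ) ≤ p := Complex.zero_le_real.2 (by positivity)
  have hp_lam : (p : ℂ) * lamMax τ = (d : ℂ)⁻¹ := by
    rw [← Complex.ofReal_mul, hp_def, one_div_mul_eq_div, mul_comm, div_mul_cancel_left₀ hpos.ne']
    simp
  -- The optimal first marginal is maximally mixed: `σ = 1 / d`.
  refine exists_isProtocolB_of_kronecker_sub_posSemidef ((outer_posSemidef _).smul hp)
    (σ := (d : ℂ)⁻¹ • 1) (Matrix.PosSemidef.one.smul (by positivity)) (by simp) ?_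
  have factored : ((d : ℂ)⁻¹ • (1 : Matrix (Fin d) (Fin d) ℂ)) ⊗ₖ (1 : Matrix (Fin d) (Fin d) ℂ) -
      (p : ℂ) • (1 : Matrix (Fin d) (Fin d) ℂ) ⊗ₖ τ =
      (p : ℂ) • (1 : Matrix (Fin d) (Fin d) ℂ) ⊗ₖ ((lamMax τ : ℂ) • 1 - τ) := by
    ext ⟨i, j⟩ ⟨i', j'⟩
    simp only [← hp_lam, Complex.coe_smul, Matrix.sub_apply, Matrix.kroneckerMap_apply,
      Matrix.smul_apply, smul_eq_mul, Complex.real_smul]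
    ring
  rw [ptrRight_smul, ptrRight_outer_transposeVec, factored]
  exact (Matrix.PosSemidef.one.kronecker (lamMax_smul_one_sub_posSemidef hτ)).smul hp

end Supermaps

/-- **Optimal probabilistic exact unitary transposition on part of a known bipartite
pure state, single call.** With `σ_B = Tr_A |ψ⟩⟨ψ|`, the set of achievable success
probabilities `p` of protocols implementing `U ↦ p · (1_m ⊗ Uᵀ)|ψ⟩⟨ψ|(1_m ⊗ Uᵀ)†`
for all `U ∈ SU(d)` has greatest element `1/(d · λ_max(σ_B))`. -/
theorem bipartite_transposition_single_call
    (d m : ℕ) (hd : 2 ≤ d) (hm : 1 ≤ m)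
    (ψ : Fin m × Fin d → ℂ) (hψ : star ψ ⬝ᵥ ψ = 1) :
    IsGreatest
      {p : ℝ |
        ∃ S Sch : Matrix ((Fin d × Fin d) × (Fin m × Fin d))
            ((Fin d × Fin d) × (Fin m × Fin d)) ℂ,
          IsProtocolB S Sch ∧
          ∀ U : Matrix (Fin d) (Fin d) ℂ, U ∈ Matrix.specialUnitaryGroup (Fin d) ℂ →
            actB S U = (p : ℂ) •
              (((1 : Matrix (Fin m) (Fin m) ℂ) ⊗ₖ Uᵀ) * outer ψ *
                ((1 : Matrix (Fin m) (Fin m) ℂ) ⊗ₖ Uᵀ)ᴴ)}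
      (1 / ((d : ℝ) * lamMax (ptrLeft (outer ψ)))) := by
  have : NeZero d := ⟨by omega⟩
  have : NeZero m := ⟨by omega⟩
  have hψ_ne : ψ ≠ 0 := fun h => by simp [h] at hψ
  have hpos : 0 < d * lamMax (ptrLeft (outer ψ)) := by
    have := trace_re_le_mul_lamMax (ptrLeft_posSemidef (outer_posSemidef ψ)).isHermitian
    rw [trace_ptrLeft, trace_outer, hψ, Complex.one_re] at this
    exact one_pos.trans_le this
  simp only [← outer_mulVec, ← contractChoi_transposeVec]
  constructor
  · obtain ⟨Sch, hSch⟩ :=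
      exists_isProtocolB_smul_outer_transposeVec (pos_of_mul_pos_right hpos d.cast_nonneg)
    exact ⟨_, Sch, hSch, fun U _ => by rw [actB_smul, actB_outer]⟩
  · rintro p ⟨S, Sch, hSch, hact⟩
    rw [eq_smul_outer_transposeVec_of_actB_eq hd hψ_ne hSch.1 hact] at hSch
    exact (le_div_iff₀ hpos).2 hSch.mul_lamMax_le_one
end
end
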